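/- arXiv:2604.05417 — 2 statements merged into one kernel-verified Lean document; each statement's English description precedes it below -/
import Mathlib

section
/- Let n ≥ 1 be a natural number and let 0 < x < y < 1. If h_n(y) ≥ g_n(y)^2 / (4·n·y), then y·(1 − (2n+1)y^n + (2n+1)y^{n+1} − y^{2n+1}) / ((1 − y)^2 · (f_n(y) − f_n(x))^2) ≥ 1 / (4·n·(y − x)^2), where f_n(t) = Σ_{s=1}^{n} t^s, g_n(t) = Σ_{s=1}^{n} s·t^{s−1}, and h_n(t) = Σ_{s=1}^{n} s·(t^{s−1} − t^{2n−s}). -/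
/-!
Summing the arithmetico-geometric series gives
`(1 - y)^2 * h_n(y) = 1 - (2n+1) y^n + (2n+1) y^(n+1) - y^(2n+1)`, so the left-hand side is
`y * h_n(y) / (f_n(y) - f_n(x))^2` (`closed_form_h`). Each `t ↦ t^s` is convex on `[0, ∞)`, so
`0 < f_n(y) - f_n(x) ≤ (y - x) * g_n(y)` (`sum_pow_sub_le`). The hypothesis
`g_n(y)^2 ≤ 4 n y h_n(y)` then bounds `(f_n(y) - f_n(x))^2` by `4 n y h_n(y) (y - x)^2`.
-/

lemma closed_form_g (n : ℕ) (y : ℝ) :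
    (1 - y) ^ 2 * ∑ s ∈ Finset.Icc 1 n, (s : ℝ) * y ^ (s - 1)
      = 1 - (n + 1) * y ^ n + n * y ^ (n + 1) := by
  induction n with
  | zero => simp
  | succ k ih =>
    rw [Finset.sum_Icc_succ_top (by omega), mul_add, ih]
    simp only [Nat.add_sub_cancel]
    push_cast
    ring

/-- The reversed sum `R_n = ∑ s y^(2n-s)` satisfies `R_(n+1) = y^2 R_n + (n+1) y^(n+1)`. -/
lemma closed_form_reversed (n : ℕ) (y : ℝ) :
    (1 - y) ^ 2 * ∑ s ∈ Finset.Icc 1 n, (s : ℝ) * y ^ (2 * n - s)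
      = n * y ^ n - (n + 1) * y ^ (n + 1) + y ^ (2 * n + 1) := by
  induction n with
  | zero => simp
  | succ k ih =>
    have hshift : ∑ s ∈ Finset.Icc 1 k, (s : ℝ) * y ^ (2 * (k + 1) - s)
        = y ^ 2 * ∑ s ∈ Finset.Icc 1 k, (s : ℝ) * y ^ (2 * k - s) := by
      rw [Finset.mul_sum]
      refine Finset.sum_congr rfl fun s hs => ?_
      rw [Finset.mem_Icc] at hs
      rw [show 2 * (k + 1) - s = (2 * k - s) + 2 by omega, pow_add]
      ring
    rw [Finset.sum_Icc_succ_top (by omega), hshift, mul_add, mul_left_comm, ih,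
      show 2 * (k + 1) - (k + 1) = k + 1 by omega]
    push_cast
    ring

lemma closed_form_h (n : ℕ) (y : ℝ) :
    (1 - y) ^ 2 * ∑ s ∈ Finset.Icc 1 n, (s : ℝ) * (y ^ (s - 1) - y ^ (2 * n - s))
      = 1 - (2 * (n : ℝ) + 1) * y ^ n + (2 * (n : ℝ) + 1) * y ^ (n + 1) - y ^ (2 * n + 1) := by
  simp only [mul_sub, Finset.sum_sub_distrib]
  rw [closed_form_g, closed_form_reversed]
  ring

lemma pow_succ_sub_le (k : ℕ) {x y : ℝ} (hx : 0 ≤ x) (hxy : x ≤ y) :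
    y ^ (k + 1) - x ^ (k + 1) ≤ (k + 1) * y ^ k * (y - x) := by
  induction k with
  | zero => simp
  | succ k ih =>
    have h1 := mul_le_mul_of_nonneg_left ih (hx.trans hxy)
    have h2 := mul_le_mul_of_nonneg_right (pow_le_pow_left₀ hx hxy (k + 1)) (sub_nonneg.2 hxy)
    push_cast
    calc y ^ (k + 1 + 1) - x ^ (k + 1 + 1)
        = y * (y ^ (k + 1) - x ^ (k + 1)) + x ^ (k + 1) * (y - x) := by ring
      _ ≤ y * ((k + 1) * y ^ k * (y - x)) + y ^ (k + 1) * (y - x) := add_le_add h1 h2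
      _ = _ := by ring

lemma sum_pow_sub_le (n : ℕ) {x y : ℝ} (hx : 0 ≤ x) (hxy : x ≤ y) :
    (∑ s ∈ Finset.Icc 1 n, y ^ s) - ∑ s ∈ Finset.Icc 1 n, x ^ s
      ≤ (∑ s ∈ Finset.Icc 1 n, (s : ℝ) * y ^ (s - 1)) * (y - x) := by
  rw [← Finset.sum_sub_distrib, Finset.sum_mul]
  refine Finset.sum_le_sum fun s hs => ?_
  obtain ⟨k, rfl⟩ : ∃ k, s = k + 1 := ⟨s - 1, by have := Finset.mem_Icc.1 hs; omega⟩
  simpa using pow_succ_sub_le k hx hxy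

/-- If `h_n(y) ≥ g_n(y)^2 / (4ny)` then the (scaled) reciprocal feedback signal of the BE
reward dominates the reciprocal feedback-signal lower bound of the BD reward:
`y·(1 − (2n+1)y^n + (2n+1)y^{n+1} − y^{2n+1}) / ((1−y)^2 (f_n(y) − f_n(x))^2) ≥ 1/(4n(y−x)^2)`,
where `f_n(t) = Σ_{s=1}^n t^s`, `g_n(t) = Σ_{s=1}^n s t^{s−1}`,
`h_n(t) = Σ_{s=1}^n s (t^{s−1} − t^{2n−s})`. -/
theorem be_reciprocal_signal_ge (n : ℕ) (hn : 1 ≤ n) (x y : ℝ)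
    (hx : 0 < x) (hxy : x < y) (hy : y < 1)
    (hcond : ∑ s ∈ Finset.Icc 1 n, (s : ℝ) * (y ^ (s - 1) - y ^ (2 * n - s))
      ≥ (∑ s ∈ Finset.Icc 1 n, (s : ℝ) * y ^ (s - 1)) ^ 2 / (4 * (n : ℝ) * y)) :
    y * (1 - (2 * (n : ℝ) + 1) * y ^ n + (2 * (n : ℝ) + 1) * y ^ (n + 1) - y ^ (2 * n + 1))
        / ((1 - y) ^ 2 * ((∑ s ∈ Finset.Icc 1 n, y ^ s) - ∑ s ∈ Finset.Icc 1 n, x ^ s) ^ 2)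
      ≥ 1 / (4 * (n : ℝ) * (y - x) ^ 2) := by
  have hD : 0 < (∑ s ∈ Finset.Icc 1 n, y ^ s) - ∑ s ∈ Finset.Icc 1 n, x ^ s := by
    refine sub_pos.2 (Finset.sum_lt_sum_of_nonempty ⟨1, by simp [hn]⟩ fun s hs => ?_)
    exact pow_lt_pow_left₀ hxy hx.le (by have := Finset.mem_Icc.1 hs; omega)
  have hDle := sum_pow_sub_le n hx.le hxy.le
  have hy0 : 0 < y := hx.trans hxy
  have hn0 : (0 : ℝ) < n := by exact_mod_cast hn
  have hyx : 0 < y - x := sub_pos.2 hxy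
  have h1y : 0 < 1 - y := sub_pos.2 hy
  rw [← closed_form_h]
  rw [ge_iff_le, div_le_iff₀ (by positivity)] at hcond
  set D := (∑ s ∈ Finset.Icc 1 n, y ^ s) - ∑ s ∈ Finset.Icc 1 n, x ^ s
  set g := ∑ s ∈ Finset.Icc 1 n, (s : ℝ) * y ^ (s - 1)
  set h := ∑ s ∈ Finset.Icc 1 n, (s : ℝ) * (y ^ (s - 1) - y ^ (2 * n - s))
  have hDsq : D ^ 2 ≤ y * h * (4 * n * (y - x) ^ 2) :=
    calc D ^ 2 ≤ (g * (y - x)) ^ 2 := pow_le_pow_left₀ hD.le hDle 2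
      _ = g ^ 2 * (y - x) ^ 2 := by ring
      _ ≤ h * (4 * n * y) * (y - x) ^ 2 := by gcongr
      _ = _ := by ring
  rw [ge_iff_le, mul_left_comm, mul_div_mul_left _ _ (by positivity),
    div_le_div_iff₀ (by positivity) (by positivity), one_mul]
  exact hDsq
end

section
/- For every α with 0.06 < α < 0.8, the inequality h_5(α) ≥ g_5(α)^2 / (20·α) holds, where g_5(α) = Σ_{s=1}^{5} s·α^{s−1} = 1 + 2α + 3α^2 + 4α^3 + 5α^4 and h_5(α) = Σ_{s=1}^{5} s·(α^{s−1} − α^{10−s}). -/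
/-!
After clearing the denominator, the claim is that
`f(α) = 20 α h₅(α) - g₅(α)²`, which equals
`-1 + 16α + 30α² + 40α³ + 45α⁴ + 56α⁵ - 146α⁶ - 120α⁷ - 85α⁸ - 40α⁹ - 20α¹⁰`,
is nonnegative on `(0.06, 0.8)`. Split `f = T + α³ W` with `T = -1 + 16α + 30α² - 55α³` and
`W = 95 + 45α + 56α² - 146α³ - ⋯ - 20α⁷`. The constant `55` is just large enough for
`W ≥ 0` at `α = 0.8`, and small enough for the cubic `T` to stay nonnegative on the interval.
-/

/-- The factor `W`: each power `α ^ (k + 1)` with a negative coefficient is at most `0.8 ^ k * α`,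
which leaves a quadratic that is decreasing on `(0, 0.8)` and positive at `0.8`. -/
lemma tail_nonneg (a : ℝ) (h0 : 0 < a) (h2 : a < 0.8) :
    0 ≤ 95 + 45 * a + 56 * a ^ 2 - 146 * a ^ 3 - 120 * a ^ 4 - 85 * a ^ 5
      - 40 * a ^ 6 - 20 * a ^ 7 := by
  have key (k : ℕ) : a ^ (k + 1) ≤ 0.8 ^ k * a := by
    rw [pow_succ]
    gcongr
  have k2 := key 2
  have k3 := key 3
  have k4 := key 4
  have k5 := key 5
  have k6 := key 6
  norm_num at k2 k3 k4 k5 k6 h2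
  nlinarith [mul_pos (sub_pos.2 h2) (sub_pos.2 h2)]

lemma cubic_nonneg (a : ℝ) (h1 : 0.06 < a) (h2 : a < 0.8) :
    0 ≤ -1 + 16 * a + 30 * a ^ 2 - 55 * a ^ 3 := by
  norm_num at h1 h2
  have h := mul_pos (sub_pos.2 h1) (sub_pos.2 h2)
  nlinarith [mul_pos h (sub_pos.2 h1)]

/-- For `0.06 < α < 0.8` one has `h₅(α) ≥ g₅(α)^2 / (20 α)`, where
`g₅(α) = Σ_{s=1}^5 s α^{s−1}` and `h₅(α) = Σ_{s=1}^5 s (α^{s−1} − α^{10−s})`. -/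
theorem h5_ge_g5_sq_div (α : ℝ) (h1 : 0.06 < α) (h2 : α < 0.8) :
    ∑ s ∈ Finset.Icc (1:ℕ) 5, (s : ℝ) * (α ^ (s - 1) - α ^ (10 - s))
      ≥ (∑ s ∈ Finset.Icc (1:ℕ) 5, (s : ℝ) * α ^ (s - 1)) ^ 2 / (20 * α) := by
  have h0 : 0 < α := lt_trans (by norm_num) h1
  have hT := cubic_nonneg α h1 h2
  have hW := mul_nonneg (pow_pos h0 3).le (tail_nonneg α h0 h2)
  rw [ge_iff_le, div_le_iff₀ (by positivity)]
  norm_num [Finset.sum_Icc_succ_top]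
  linarith
end
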